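/- Let β ∈ (1,2] and let (d_i)_{i=1}^∞ ∈ Ω^ℕ be a sequence of smallest period k ≥ 2. Then (d_i) ∈ 𝐔_β if and only if for every n ≥ 0 each of the three shifted binary sequences σⁿ((d_i¹)), σⁿ((d_i²)) and σⁿ((1 − d_i¹ − d_i²)) is lexicographically strictly smaller than δ(β), where σ is the left shift. -/

import Mathlib

open Filter Set

noncomputable section

namespace FatSierpinski

/-- The digit set Ω = {(0,0),(1,0),(0,1)} ⊆ ℝ². -/
def OmegaR : Set (ℝ × ℝ) := {(0, 0), (1, 0), (0, 1)}

/-- The fat Sierpinski gasket `S_β` (sequences are 0-indexed: `d i` is the digit d_{i+1}). -/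
def Sfat (β : ℝ) : Set (ℝ × ℝ) :=
  {x | ∃ d : ℕ → ℝ × ℝ, (∀ i, d i ∈ OmegaR) ∧ x = ∑' i : ℕ, (β ^ (i + 1))⁻¹ • d i}

/-- The convex hull `Δ_β` of `S_β`. -/
def Delta (β : ℝ) : Set (ℝ × ℝ) := convexHull ℝ (Sfat β)

/-- The map `f_d(x) = (x + d)/β`. -/
def fmap (β : ℝ) (d : ℝ × ℝ) (x : ℝ × ℝ) : ℝ × ℝ := β⁻¹ • (x + d)

/-- The overlap region `O_β = ⋃_{c ≠ d ∈ Ω} f_c(Δ_β) ∩ f_d(Δ_β)`. -/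
def Ofat (β : ℝ) : Set (ℝ × ℝ) :=
  ⋃ c ∈ OmegaR, ⋃ d ∈ OmegaR, ⋃ (_ : c ≠ d), (fmap β c '' Delta β) ∩ (fmap β d '' Delta β)

/-- The univoque set of codings `𝐔_β`. -/
def Ufat (β : ℝ) : Set (ℕ → ℝ × ℝ) :=
  {d | (∀ i, d i ∈ OmegaR) ∧
    ∀ n : ℕ, (∑' i : ℕ, (β ^ (i + 1))⁻¹ • d (n + i)) ∉ Ofat β}

/-- `d` has smallest period `k`. -/
def SmallestPeriod {α : Type*} (d : ℕ → α) (k : ℕ) : Prop :=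
  0 < k ∧ (∀ i, d (i + k) = d i) ∧ ∀ j, 0 < j → j < k → ∃ i, d (i + j) ≠ d i

/-- The critical base `β_k`. -/
def betaK (k : ℕ) : ℝ :=
  sInf {β : ℝ | β ∈ Set.Ioc (1 : ℝ) 2 ∧ ∃ d ∈ Ufat β, SmallestPeriod d k}

/-- Strict lexicographic order on sequences. -/
def seqLT {α : Type*} [Preorder α] (a b : ℕ → α) : Prop :=
  ∃ n, (∀ i < n, a i = b i) ∧ a n < b n

/-- Weak lexicographic order on sequences. -/
def seqLE {α : Type*} [Preorder α] (a b : ℕ → α) : Prop :=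
  seqLT a b ∨ a = b

/-- `a` is a 0-1 sequence. -/
def IsBinary (a : ℕ → ℕ) : Prop := ∀ i, a i ≤ 1

/-- `a` does not end with `0^∞`. -/
def NotEndInZeros (a : ℕ → ℕ) : Prop := ∀ N, ∃ i, N ≤ i ∧ a i ≠ 0

/-- `∑_{i=1}^∞ a_i β^{-i} = 1` (0-indexed: `a i` is a_{i+1}). -/
def SumsToOne (β : ℝ) (a : ℕ → ℕ) : Prop :=
  ∑' i : ℕ, (a i : ℝ) / β ^ (i + 1) = 1

/-- `a` is the quasi-greedy β-expansion of 1: the lexicographically largest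
binary sequence not ending in `0^∞` whose value in base β is 1. -/
def IsQuasiGreedy (β : ℝ) (a : ℕ → ℕ) : Prop :=
  IsBinary a ∧ NotEndInZeros a ∧ SumsToOne β a ∧
    ∀ b : ℕ → ℕ, IsBinary b → NotEndInZeros b → SumsToOne β b → seqLE b a

/-- `w⁺`: replace the final digit 0 of a block by 1. -/
def plusBlock (w : List ℕ) : List ℕ := w.dropLast ++ [1]

/-- `Θ` flips the outer digits of every consecutive triple
(000↦101, 001↦100, 100↦001, 101↦000). -/
def thetaBlock (w : List ℕ) : List ℕ :=
  w.mapIdx fun i x => if i % 3 = 1 then x else 1 - x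

/-- `tB n` is the block `t_{n+1}`: `t_1 = 100`, `t_{n+1} = t_n⁺ Θ(t_n⁺)`. -/
def tB : ℕ → List ℕ
  | 0 => [1, 0, 0]
  | n + 1 => plusBlock (tB n) ++ thetaBlock (plusBlock (tB n))

/-- The sequence `u w^∞` (the block `u` followed by `w` repeated forever). -/
def prefixPeriodic (u w : List ℕ) : ℕ → ℕ := fun i =>
  if i < u.length then u.getD i 0 else w.getD ((i - u.length) % w.length) 0

/-- The periodic sequence `w^∞`. -/
def periodicSeq (w : List ℕ) : ℕ → ℕ := fun i => w.getD (i % w.length) 0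

/-- The componentwise limit `λ = 101001000101…` of the blocks `t_n`
(the digit `λ_{i+1}` has stabilized in `t_{i+2} = tB (i+1)`). -/
def lamSeq : ℕ → ℕ := fun i => (tB (i + 1)).getD i 0

/-- `β_c` is the unique base in (1,2] with `∑ λ_i β^{-i} = 1`. -/
def IsBetaC (β : ℝ) : Prop := β ∈ Set.Ioc (1 : ℝ) 2 ∧ SumsToOne β lamSeq

/-- The sequence `t_{n+2}⁺ (Θ(t_{n+2}))^∞`, the quasi-greedy expansion of 1 for `β̂_n`. -/
def hatSeq (n : ℕ) : ℕ → ℕ :=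
  prefixPeriodic (plusBlock (tB (n + 1))) (thetaBlock (tB (n + 1)))

/-- The Sharkovskii ordering `k ⊳ ℓ` on positive integers. -/
def Sharkovskii (k l : ℕ) : Prop :=
  ∃ a b c d : ℕ, k = 2 ^ a * (2 * b + 1) ∧ l = 2 ^ c * (2 * d + 1) ∧ k ≠ l ∧
    ((1 ≤ b ∧ d = 0) ∨ (1 ≤ b ∧ 1 ≤ d ∧ (a < c ∨ (a = c ∧ b < d))) ∨
      (b = 0 ∧ d = 0 ∧ c < a))

/-- The digit set Ω as pairs of naturals (for combinatorial statements). -/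
def OmegaD : Set (ℕ × ℕ) := {(0, 0), (1, 0), (0, 1)}

/-- The periodic extension `(d_1 … d_k)^∞` of a block. -/
def cyc (d : List (ℕ × ℕ)) : ℕ → ℕ × ℕ := fun i => d.getD (i % d.length) (0, 0)

/-- Strict lexicographic order on lists. -/
def listLT (u v : List ℕ) : Prop := List.Lex (· < ·) u v

/-- Weak lexicographic order on lists. -/
def listLE (u v : List ℕ) : Prop := listLT u v ∨ u = v

/-- The first components `d_1¹ … d_k¹` of a block over Ω. -/
def comp1 (d : List (ℕ × ℕ)) : List ℕ := d.map Prod.fst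

/-- The second components `d_1² … d_k²` of a block over Ω. -/
def comp2 (d : List (ℕ × ℕ)) : List ℕ := d.map Prod.snd

/-- The digits `(1 - d_1⁺) … (1 - d_k⁺)` where `d⁺ = d¹ + d²`. -/
def comp3 (d : List (ℕ × ℕ)) : List ℕ := d.map fun x => 1 - x.1 - x.2

/-- Cyclic shift of a list by `j`. -/
def rot {α : Type*} (j : ℕ) (l : List α) : List α := l.drop j ++ l.take j

/-- `d` is a representation of the binary block `a`. -/
def IsRepresentation (a : List ℕ) (d : List (ℕ × ℕ)) : Prop :=
  d.length = a.length ∧ (∀ x ∈ d, x ∈ OmegaD) ∧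
  SmallestPeriod (cyc d) a.length ∧
  comp1 d = a ∧ listLE (comp3 d) (comp2 d) ∧ listLE (comp2 d) a ∧
  ∀ j < a.length,
    listLE (comp1 (rot j d)) a ∧ listLE (comp2 (rot j d)) a ∧ listLE (comp3 (rot j d)) a

/-- A binary block is admissible if it has a representation. -/
def IsAdmissible (a : List ℕ) : Prop := ∃ d, IsRepresentation a d

/-- The `i`-th consecutive triple of a block (0-indexed). -/
def tripleAt (a : List ℕ) (i : ℕ) : List ℕ :=
  [a.getD (3 * i) 0, a.getD (3 * i + 1) 0, a.getD (3 * i + 2) 0]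

/-- The edges of the directed graph on {000, 001, 100, 101} defining the subshift `X`. -/
def XEdge (u v : List ℕ) : Prop :=
  (u, v) ∈ ({([1,0,1], [0,0,1]), ([1,0,1], [0,0,0]), ([0,0,1], [0,0,0]),
             ([0,0,0], [1,0,1]), ([0,0,0], [1,0,0]), ([1,0,0], [1,0,1])} :
      Set (List ℕ × List ℕ))



/-- Value of a real digit sequence in base `β`. -/
def V (β : ℝ) (e : ℕ → ℝ) : ℝ := ∑' i : ℕ, e i / β ^ (i + 1)

/-- A sequence with entries in the unit interval. -/
def Unit01 (e : ℕ → ℝ) : Prop := ∀ i, 0 ≤ e i ∧ e i ≤ 1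

lemma geom_hasSum {β : ℝ} (hβ : 1 < β) : HasSum (fun i : ℕ => 1 / β ^ (i + 1)) (1 / (β - 1)) := by
  have h := (hasSum_geometric_of_lt_one (r := β⁻¹) (by positivity) (inv_lt_one_of_one_lt₀ hβ)).mul_left β⁻¹
  have e1 : (fun i : ℕ => β⁻¹ * β⁻¹ ^ i) = fun i : ℕ => 1 / β ^ (i + 1) := by
    funext i
    rw [← pow_succ', inv_pow, one_div]
  have e2 : β⁻¹ * (1 - β⁻¹)⁻¹ = 1 / (β - 1) := by
    have h0 : β ≠ 0 := by linarith
    rw [← mul_inv, mul_sub, mul_one, mul_inv_cancel₀ h0, one_div]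
  rw [e1, e2] at h
  exact h

lemma V_summable {β : ℝ} (hβ : 1 < β) {e : ℕ → ℝ} (he : Unit01 e) :
    Summable (fun i : ℕ => e i / β ^ (i + 1)) := by
  refine Summable.of_nonneg_of_le (fun i => ?_) (fun i => ?_) (geom_hasSum hβ).summable
  · have := (he i).1
    positivity
  · have := (he i).2
    gcongr

lemma V_nonneg {β : ℝ} (hβ : 1 < β) {e : ℕ → ℝ} (he : Unit01 e) : 0 ≤ V β e := by
  refine tsum_nonneg fun i => ?_
  have := (he i).1
  positivity

lemma V_le {β : ℝ} (hβ : 1 < β) {e : ℕ → ℝ} (he : Unit01 e) : V β e ≤ 1 / (β - 1) := by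
  rw [← (geom_hasSum hβ).tsum_eq]
  refine (V_summable hβ he).tsum_le_tsum (fun i => ?_) (geom_hasSum hβ).summable
  have := (he i).2
  gcongr

lemma V_pos {β : ℝ} (hβ : 1 < β) {e : ℕ → ℝ} (he : Unit01 e) (i : ℕ) (hi : 0 < e i) :
    0 < V β e := by
  refine (V_summable hβ he).tsum_pos (fun i => ?_) i ?_
  · have := (he i).1
    positivity
  · positivity

lemma V_step {β : ℝ} (hβ : 1 < β) {e : ℕ → ℝ} (he : Unit01 e) :
    β * V β e = e 0 + V β (fun i => e (1 + i)) := by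
  unfold V
  rw [(V_summable hβ he).tsum_eq_zero_add, mul_add, ← tsum_mul_left]
  have : β ≠ 0 := by linarith
  congr 1
  · simp only [zero_add, pow_one]
    field_simp
  · congr 1
    funext i
    show β * (e (i + 1) / β ^ (i + 1 + 1)) = e (1 + i) / β ^ (i + 1)
    rw [add_comm 1 i, pow_succ β (i + 1)]
    field_simp

lemma V_step' {β : ℝ} (hβ : 1 < β) {e : ℕ → ℝ} (he : Unit01 e) (n : ℕ) :
    β * V β (fun i => e (n + i)) = e n + V β (fun i => e (n + 1 + i)) := by
  rw [V_step hβ (e := fun i => e (n + i)) (fun i => he _)]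
  simp [add_assoc]

lemma V_diff {β : ℝ} (hβ : 1 < β) {e f : ℕ → ℝ} (he : Unit01 e) (hf : Unit01 f) (m : ℕ)
    (h : ∀ i < m, e i = f i) :
    β ^ m * (V β e - V β f) = V β (fun i => e (m + i)) - V β (fun i => f (m + i)) := by
  induction m with
  | zero => simp
  | succ m ih =>
    have h1 := ih fun i hi => h i (by omega)
    have h2 := V_step' hβ he m
    have h3 := V_step' hβ hf m
    have h4 := h m (by omega)
    rw [pow_succ]
    linear_combination β * h1 + h2 - h3 + h4

lemma V_diff' {β : ℝ} (hβ : 1 < β) {e f : ℕ → ℝ} (he : Unit01 e) (hf : Unit01 f) (m : ℕ)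
    (h : ∀ i < m, e i = f i) :
    β ^ (m + 1) * (V β e - V β f) =
      e m - f m + V β (fun i => e (m + 1 + i)) - V β (fun i => f (m + 1 + i)) := by
  have h1 := V_diff hβ he hf m h
  have h2 := V_step' hβ he m
  have h3 := V_step' hβ hf m
  rw [pow_succ]
  linear_combination β * h1 + h2 - h3

/-- Quasi-greedy remainders. -/
def qr (β x : ℝ) : ℕ → ℝ
  | 0 => x
  | n + 1 => if 1 < β * qr β x n then β * qr β x n - 1 else β * qr β x n

/-- Quasi-greedy digits. -/
def qd (β x : ℝ) (n : ℕ) : ℕ := if 1 < β * qr β x n then 1 else 0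

lemma qr_mem {β x : ℝ} (hβ : 1 < β) (hβ2 : β ≤ 2) (hx : 0 < x) (hx2 : x ≤ 1 / (β - 1)) (n : ℕ) :
    0 < qr β x n ∧ qr β x n ≤ 1 / (β - 1) := by
  have hb : 0 < β - 1 := by linarith
  induction n with
  | zero => exact ⟨hx, hx2⟩
  | succ n ih =>
    obtain ⟨h1, h2⟩ := ih
    rw [le_div_iff₀ hb] at *
    simp only [qr]
    split_ifs with h
    · refine ⟨by linarith, ?_⟩
      nlinarith
    · refine ⟨by positivity, ?_⟩
      push Not at h
      nlinarith

lemma qd_unit (β x : ℝ) : Unit01 (fun i => (qd β x i : ℝ)) := by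
  intro i
  simp only [qd]
  split_ifs <;> simp

lemma qd_V {β x : ℝ} (hβ : 1 < β) (hβ2 : β ≤ 2) (hx : 0 < x) (hx2 : x ≤ 1 / (β - 1)) (n : ℕ) :
    V β (fun i => (qd β x (n + i) : ℝ)) = qr β x n := by
  have key : ∀ m n, β ^ m * (V β (fun i => (qd β x (n + i) : ℝ)) - qr β x n) =
      V β (fun i => (qd β x (n + m + i) : ℝ)) - qr β x (n + m) := by
    intro m
    induction m with
    | zero => intro n; simp
    | succ m ih =>
      intro n
      have h1 := ih n
      have h2 := V_step' hβ (qd_unit β x) (n + m)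
      have h3 : qr β x (n + m + 1) = β * qr β x (n + m) - qd β x (n + m) := by
        simp only [qr, qd]; split_ifs <;> simp
      rw [← add_assoc, h3, pow_succ]
      linear_combination β * h1 + h2
  have hb : ∀ m, β ^ m * |V β (fun i => (qd β x (n + i) : ℝ)) - qr β x n| ≤ 1 / (β - 1) := by
    intro m
    rw [← abs_of_pos (show 0 < β ^ m by positivity), ← abs_mul, key]
    have h1 := qr_mem hβ hβ2 hx hx2 (n + m)
    have hu : Unit01 (fun i => (qd β x (n + m + i) : ℝ)) := fun i => qd_unit β x (n + m + i)
    have h2 := V_nonneg hβ hu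
    have h3 := V_le hβ hu
    rw [abs_le]
    constructor <;> linarith
  by_contra hne
  have hpos : 0 < |V β (fun i => (qd β x (n + i) : ℝ)) - qr β x n| :=
    abs_pos.2 (sub_ne_zero.2 hne)
  obtain ⟨m, hm⟩ := pow_unbounded_of_one_lt
    (1 / (β - 1) / |V β (fun i => (qd β x (n + i) : ℝ)) - qr β x n|) hβ
  rw [div_lt_iff₀ hpos] at hm
  exact absurd (hb m) (not_le.2 hm)

lemma nat_unit {a : ℕ → ℕ} (ha : IsBinary a) : Unit01 (fun i => (a i : ℝ)) := fun i =>
  ⟨Nat.cast_nonneg _, Nat.cast_le_one.2 (ha i)⟩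

lemma quasi_tail {β : ℝ} (hβ : 1 < β) (hβ2 : β ≤ 2) {a : ℕ → ℕ} (ha : IsQuasiGreedy β a)
    (m : ℕ) (hm : a m = 0) : V β (fun i => (a (m + 1 + i) : ℝ)) ≤ 1 := by
  obtain ⟨hbin, hne, hsum, hmax⟩ := ha
  by_contra hcon
  push Not at hcon
  have hau := nat_unit hbin
  set x := V β (fun i => (a (m + 1 + i) : ℝ)) - 1 with hxdef
  have hx : 0 < x := by linarith
  have hx2 : x ≤ 1 / (β - 1) := by
    have := V_le hβ (e := fun i => (a (m + 1 + i) : ℝ)) (fun i => hau _)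
    linarith
  set b : ℕ → ℕ := fun i => if i < m then a i else if i = m then 1 else qd β x (i - (m + 1))
    with hb
  have hqbin : ∀ i, qd β x i ≤ 1 := by
    intro i; simp only [qd]; split_ifs <;> simp
  have hbbin : IsBinary b := by
    intro i
    simp only [hb]
    split_ifs
    · exact hbin i
    · exact le_rfl
    · exact hqbin _
  have hlt : ∀ i < m, b i = a i := by
    intro i hi; simp [hb, hi]
  have hbm : b m = 1 := by simp [hb]
  have htail : ∀ i, b (m + 1 + i) = qd β x i := by
    intro i
    have h1 : ¬ (m + 1 + i < m) := by omega
    have h2 : ¬ (m + 1 + i = m) := by omega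
    simp [hb, h1, h2]
  have hbsum : V β (fun i => (b i : ℝ)) = 1 := by
    have h := V_diff' hβ (nat_unit hbbin) hau m (fun i hi => by simp [hlt i hi])
    have h1 : V β (fun i => (b (m + 1 + i) : ℝ)) = x := by
      simp only [htail]
      have := qd_V hβ hβ2 hx hx2 0
      simpa [qr] using this
    have h2 : V β (fun i => (a i : ℝ)) = 1 := hsum
    simp only [h1, h2, hbm, hm] at h
    have h3 : β ^ (m + 1) * (V β (fun i => (b i : ℝ)) - 1) = 0 := by
      rw [h, hxdef]; push_cast; ring
    have h4 : β ^ (m + 1) ≠ 0 := by positivity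
    have := (mul_eq_zero.1 h3).resolve_left h4
    linarith
  have hbne : NotEndInZeros b := by
    intro N
    by_contra hN
    push Not at hN
    have h1 := qd_V hβ hβ2 hx hx2 N
    have h2 : (fun i => (qd β x (N + i) : ℝ)) = fun _ => 0 := by
      funext i
      rw [← htail, hN _ (by omega)]; simp
    have h3 := (qr_mem hβ hβ2 hx hx2 N).1
    rw [h2] at h1
    simp [V] at h1
    linarith
  rcases hmax b hbbin hbne hbsum with ⟨n, hn1, hn2⟩ | heq
  · rcases lt_trichotomy n m with h | h | h
    · rw [hlt n h] at hn2; omega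
    · subst h; omega
    · have := hn1 m h; omega
  · have := congrFun heq m
    omega

/-- binary real sequences -/
def Bin (e : ℕ → ℝ) : Prop := ∀ i, e i = 0 ∨ e i = 1

lemma Bin.unit {e : ℕ → ℝ} (he : Bin e) : Unit01 e := by
  intro i
  rcases he i with h | h <;> simp [h]

lemma per_mul {α : Type*} {e : ℕ → α} {k : ℕ} (hper : ∀ i, e (i + k) = e i) (n i : ℕ) :
    e (i + n * k) = e i := by
  induction n with
  | zero => simp
  | succ n ih => rw [add_mul, one_mul, ← add_assoc, hper, ih]

lemma core {β : ℝ} (hβ : 1 < β) (hβ2 : β ≤ 2) {a : ℕ → ℕ} (ha : IsQuasiGreedy β a)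
    {e : ℕ → ℝ} (he : Bin e) {k : ℕ} (hk : 0 < k) (hper : ∀ i, e (i + k) = e i)
    (hne : ∃ i, e i ≠ 1) :
    (∀ n, e n = 0 → V β (fun i => e (n + 1 + i)) < 1) ↔
      ∀ n, seqLT (fun i => e (n + i)) (fun i => (a i : ℝ)) := by
  have hau := nat_unit ha.1
  have hVa : V β (fun i => (a i : ℝ)) = 1 := ha.2.2.1
  have hVper : ∀ N n, V β (fun i => e (n + N * k + i)) = V β (fun i => e (n + i)) := by
    intro N n
    congr 1
    funext i
    rw [← per_mul hper N (n + i)]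
    congr 1; ring
  constructor
  · intro H
    obtain ⟨n0, hn0⟩ := hne
    have hn0 := (he n0).resolve_right hn0
    have hall : ∀ j, V β (fun i => e (n0 + 1 + j + i)) < 1 := by
      intro j
      induction j with
      | zero => exact H n0 hn0
      | succ j ih =>
        rcases he (n0 + 1 + j) with h | h
        · exact H _ h
        · have := V_step' hβ he.unit (n0 + 1 + j)
          rw [h] at this
          rw [← add_assoc]
          nlinarith
    have hall2 : ∀ n, V β (fun i => e (n + i)) < 1 := by
      intro n
      rw [← hVper (n0 + 1) n]
      have h1 : n0 + 1 ≤ n + (n0 + 1) * k := by nlinarith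
      obtain ⟨j, hj⟩ := Nat.exists_eq_add_of_le h1
      rw [hj]; exact hall j
    intro n
    have hdiff : ∃ m, e (n + m) ≠ a m := by
      by_contra hcon
      push Not at hcon
      have h1 := hall2 n
      simp only [hcon] at h1
      linarith
    classical
    have hm := Nat.find_spec hdiff
    have hmin : ∀ i < Nat.find hdiff, e (n + i) = a i := fun i hi => by
      have := Nat.find_min hdiff hi
      push Not at this; exact this
    set m := Nat.find hdiff
    refine ⟨m, hmin, ?_⟩
    have ham : a m = 0 ∨ a m = 1 := by have := ha.1 m; omega
    rcases he (n + m) with h | h <;> rcases ham with h' | h'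
    · simp [h, h'] at hm
    · simp [h, h']
    · exfalso
      have h1 := V_diff' hβ (e := fun i => e (n + i)) (fun i => he.unit _) hau m hmin
      have h2 := quasi_tail hβ hβ2 ha m h'
      have h3 := V_nonneg hβ (e := fun i => e (n + (m + 1 + i))) (fun i => he.unit _)
      have h4 := hall2 n
      simp only [h, h', hVa] at h1
      have h5 : β ^ (m + 1) * (V β (fun i => e (n + i)) - 1) < 0 :=
        mul_neg_of_pos_of_neg (by positivity) (by linarith)
      push_cast at h1
      linarith
    · simp [h, h'] at hm
  · intro H
    obtain ⟨n1, hn1, hmax⟩ := Finset.exists_max_image (Finset.range k)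
      (fun n => V β (fun i => e (n + i))) ⟨0, by simpa using hk⟩
    have hmax2 : ∀ n, V β (fun i => e (n + i)) ≤ V β (fun i => e (n1 + i)) := by
      intro n
      have h1 := hVper (n / k) (n % k)
      rw [mul_comm, Nat.mod_add_div] at h1
      rw [h1]
      exact hmax _ (by simpa using Nat.mod_lt _ hk)
    have hX : V β (fun i => e (n1 + i)) < 1 := by
      obtain ⟨m, hm1, hm2⟩ := H n1
      have h1 := V_diff' hβ (e := fun i => e (n1 + i)) (fun i => he.unit _) hau m hm1
      have ham : a m = 0 ∨ a m = 1 := by have := ha.1 m; omega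
      have ham1 : a m = 1 ∧ e (n1 + m) = 0 := by
        rcases he (n1 + m) with h | h <;> rcases ham with h' | h' <;> simp [h, h'] at hm2 ⊢
        linarith
      obtain ⟨i, hi, hi2⟩ := ha.2.1 (m + 1)
      obtain ⟨j, rfl⟩ := Nat.exists_eq_add_of_le hi
      have h2 := V_pos hβ (e := fun i => (a (m + 1 + i) : ℝ)) (fun i => hau _) j
        (by exact_mod_cast Nat.pos_of_ne_zero hi2)
      have h3 := hmax2 (n1 + (m + 1))
      simp only [ham1.1, ham1.2, hVa, ← add_assoc] at h1
      simp only [← add_assoc] at h3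
      by_contra hcon
      push Not at hcon
      have h5 : 1 ≤ β ^ (m + 1) := one_le_pow₀ hβ.le
      push_cast at h1
      nlinarith
    intro n _
    exact (hmax2 _).trans_lt hX

lemma OmegaR_cases {x : ℝ × ℝ} (hx : x ∈ OmegaR) : x = (0, 0) ∨ x = (1, 0) ∨ x = (0, 1) := by
  simpa [OmegaR] using hx

lemma bin1 {d : ℕ → ℝ × ℝ} (hd : ∀ i, d i ∈ OmegaR) : Bin (fun i => (d i).1) := by
  intro i
  rcases OmegaR_cases (hd i) with h | h | h <;> simp [h]

lemma bin2 {d : ℕ → ℝ × ℝ} (hd : ∀ i, d i ∈ OmegaR) : Bin (fun i => (d i).2) := by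
  intro i
  rcases OmegaR_cases (hd i) with h | h | h <;> simp [h]

lemma bin3 {d : ℕ → ℝ × ℝ} (hd : ∀ i, d i ∈ OmegaR) : Bin (fun i => 1 - (d i).1 - (d i).2) := by
  intro i
  rcases OmegaR_cases (hd i) with h | h | h <;> simp [h]

lemma tsum_eq {β : ℝ} (hβ : 1 < β) {d : ℕ → ℝ × ℝ} (hd : ∀ i, d i ∈ OmegaR) :
    ∑' i : ℕ, (β ^ (i + 1))⁻¹ • d i = (V β (fun i => (d i).1), V β (fun i => (d i).2)) := by
  have h1 := (V_summable hβ (bin1 hd).unit).hasSum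
  have h2 := (V_summable hβ (bin2 hd).unit).hasSum
  have h := h1.prodMk h2
  refine Eq.trans ?_ h.tsum_eq
  congr 1
  funext i
  ext <;> simp [div_eq_inv_mul]

lemma V3 {β : ℝ} (hβ : 1 < β) {d : ℕ → ℝ × ℝ} (hd : ∀ i, d i ∈ OmegaR) :
    V β (fun i => 1 - (d i).1 - (d i).2) =
      1 / (β - 1) - V β (fun i => (d i).1) - V β (fun i => (d i).2) := by
  have h1 := (V_summable hβ (bin1 hd).unit).hasSum
  have h2 := (V_summable hβ (bin2 hd).unit).hasSum
  have h := ((geom_hasSum hβ).sub h1).sub h2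
  rw [V]
  refine Eq.trans ?_ h.tsum_eq
  congr 1
  funext i
  ring

lemma V_one {β : ℝ} (hβ : 1 < β) : V β (fun _ => 1) = 1 / (β - 1) := (geom_hasSum hβ).tsum_eq

lemma V_zero (β : ℝ) : V β (fun _ => 0) = 0 := by simp [V]

lemma Delta_eq {β : ℝ} (hβ : 1 < β) (x y : ℝ) :
    (x, y) ∈ Delta β ↔ 0 ≤ x ∧ 0 ≤ y ∧ x + y ≤ 1 / (β - 1) := by
  have hM : 0 < 1 / (β - 1) := by
    have : 0 < β - 1 := by linarith
    positivity
  constructor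
  · have hsub : Sfat β ⊆ {p : ℝ × ℝ | 0 ≤ p.1 ∧ 0 ≤ p.2 ∧ p.1 + p.2 ≤ 1 / (β - 1)} := by
      rintro p ⟨d, hd, rfl⟩
      rw [tsum_eq hβ hd]
      refine ⟨V_nonneg hβ (bin1 hd).unit, V_nonneg hβ (bin2 hd).unit, ?_⟩
      have := V_nonneg hβ (bin3 hd).unit
      rw [V3 hβ hd] at this
      simp only
      linarith
    have hconv : Convex ℝ {p : ℝ × ℝ | 0 ≤ p.1 ∧ 0 ≤ p.2 ∧ p.1 + p.2 ≤ 1 / (β - 1)} := by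
      rintro ⟨p1, p2⟩ ⟨h1, h2, h3⟩ ⟨q1, q2⟩ ⟨h4, h5, h6⟩ s t hs ht hst
      simp only [Prod.smul_mk, Prod.mk_add_mk, Set.mem_ofPred_eq, smul_eq_mul] at *
      refine ⟨by positivity, by positivity, ?_⟩
      have h7 := mul_le_mul_of_nonneg_left h3 hs
      have h8 := mul_le_mul_of_nonneg_left h6 ht
      have : 1 / (β - 1) = s * (1 / (β - 1)) + t * (1 / (β - 1)) := by
        rw [← add_mul, hst, one_mul]
      linarith
    intro h
    exact convexHull_min hsub hconv h
  · rintro ⟨hx, hy, hxy⟩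
    set M := 1 / (β - 1) with hMdef
    have hc : ∀ c ∈ OmegaR, (M * c.1, M * c.2) ∈ Delta β := by
      intro c hc
      refine subset_convexHull ℝ _ ⟨fun _ => c, fun _ => hc, ?_⟩
      rw [tsum_eq hβ (fun _ => hc)]
      rcases OmegaR_cases hc with rfl | rfl | rfl <;> simp [V_one hβ, V_zero, hMdef]
    have h0 := hc (0, 0) (by simp [OmegaR])
    have h1 := hc (1, 0) (by simp [OmegaR])
    have h2 := hc (0, 1) (by simp [OmegaR])
    have hcv : Convex ℝ (Delta β) := convex_convexHull ℝ _
    have hz : ∑ i : Fin 3, (![1 - x / M - y / M, x / M, y / M] i) •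
        (![(M * 0, M * 0), (M * 1, M * 0), (M * 0, M * 1)] i : ℝ × ℝ) ∈ Delta β := by
      refine hcv.sum_mem (fun i _ => ?_) ?_ (fun i _ => ?_)
      · fin_cases i
        · have : x / M + y / M ≤ 1 := by
            rw [← add_div, div_le_one hM]; exact hxy
          simp; linarith
        · simp; positivity
        · simp; positivity
      · simp [Fin.sum_univ_three]
        ring
      · fin_cases i
        · exact h0
        · exact h1
        · exact h2
    convert hz using 1
    simp [Fin.sum_univ_three]
    constructor <;> field_simp

lemma fmap_mem {β : ℝ} (hβ : 1 < β) (c p : ℝ × ℝ) :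
    p ∈ fmap β c '' Delta β ↔ β • p - c ∈ Delta β := by
  have h0 : β ≠ 0 := by linarith
  constructor
  · rintro ⟨x, hx, rfl⟩
    simpa [fmap, smul_smul, h0] using hx
  · intro h
    exact ⟨_, h, by simp [fmap, smul_smul, h0]⟩

lemma Ofat_iff {β : ℝ} (hβ : 1 < β) {d : ℕ → ℝ × ℝ} (hd : ∀ i, d i ∈ OmegaR) (n : ℕ) :
    (∑' i : ℕ, (β ^ (i + 1))⁻¹ • d (n + i)) ∉ Ofat β ↔
      ((d n).1 = 0 → V β (fun i => (d (n + 1 + i)).1) < 1) ∧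
      ((d n).2 = 0 → V β (fun i => (d (n + 1 + i)).2) < 1) ∧
      (1 - (d n).1 - (d n).2 = 0 →
        V β (fun i => 1 - (d (n + 1 + i)).1 - (d (n + 1 + i)).2) < 1) := by
  have hd' : ∀ i, d (n + 1 + i) ∈ OmegaR := fun i => hd _
  rw [tsum_eq hβ (fun i => hd (n + i)), V3 hβ hd']
  have s1 := V_step' hβ (bin1 hd).unit n
  have s2 := V_step' hβ (bin2 hd).unit n
  have q1 := V_nonneg hβ (bin1 hd').unit
  have q2 := V_nonneg hβ (bin2 hd').unit
  have q3 := V_nonneg hβ (bin3 hd').unit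
  rw [V3 hβ hd'] at q3
  generalize V β (fun i => (d (n + 1 + i)).1) = x at *
  generalize V β (fun i => (d (n + 1 + i)).2) = y at *
  generalize V β (fun i => (d (n + i)).1) = X at *
  generalize V β (fun i => (d (n + i)).2) = Y at *
  have hmem : ∀ c1 c2 : ℝ, (X, Y) ∈ fmap β (c1, c2) '' Delta β ↔
      0 ≤ (d n).1 + x - c1 ∧ 0 ≤ (d n).2 + y - c2 ∧
        (d n).1 + x - c1 + ((d n).2 + y - c2) ≤ 1 / (β - 1) := by
    intro c1 c2
    rw [fmap_mem hβ, ← Delta_eq hβ, ← s1, ← s2]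
    simp
  have hO : (X, Y) ∈ Ofat β ↔ ∃ c ∈ OmegaR, c ≠ d n ∧ (X, Y) ∈ fmap β c '' Delta β := by
    have hself : (X, Y) ∈ fmap β (d n) '' Delta β := by
      have := hmem (d n).1 (d n).2
      rw [Prod.mk.eta] at this
      rw [this]
      refine ⟨by linarith, by linarith, by linarith⟩
    simp only [Ofat, Set.mem_iUnion, Set.mem_inter_iff, exists_prop]
    constructor
    · rintro ⟨c, hc, c', hc', hne, h1, h2⟩
      by_cases h : c = d n
      · exact ⟨c', hc', fun h' => hne (h.trans h'.symm), h2⟩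
      · exact ⟨c, hc, h, h1⟩
    · rintro ⟨c, hc, hne, h⟩
      exact ⟨c, hc, d n, hd n, hne, h, hself⟩
  rw [hO]
  have hex : ∀ P : ℝ × ℝ → Prop, (∃ c ∈ OmegaR, P c) ↔ P (0, 0) ∨ P (1, 0) ∨ P (0, 1) := by
    intro P; simp [OmegaR]
  rw [hex]
  simp only [hmem]
  clear hmem hO hex
  generalize 1 / (β - 1) = M at *
  rcases OmegaR_cases (hd n) with h | h | h <;> simp only [h] <;> norm_num
  all_goals
    constructor
    · rintro ⟨h1, h2⟩
      constructor
      · by_contra hc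
        push Not at hc
        first
        | linarith [h1 (by linarith) (by linarith)]
        | linarith [h2 (by linarith) (by linarith)]
        | linarith [h1 (by linarith) (by linarith) (by linarith)]
        | linarith [h2 (by linarith) (by linarith) (by linarith)]
      · by_contra hc
        push Not at hc
        first
        | linarith [h1 (by linarith) (by linarith)]
        | linarith [h2 (by linarith) (by linarith)]
        | linarith [h1 (by linarith) (by linarith) (by linarith)]
        | linarith [h2 (by linarith) (by linarith) (by linarith)]
    · rintro ⟨h1, h2⟩
      refine ⟨fun h => by intros; linarith, fun h => by intros; linarith⟩

/-- Lexicographic characterization of the periodic sequences in 𝐔_β: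
a sequence of smallest period k ≥ 2 lies in 𝐔_β iff all shifts of the three
associated binary sequences are lexicographically strictly below δ(β). -/
theorem stmt14 (β : ℝ) (hβ : β ∈ Set.Ioc (1 : ℝ) 2) (a : ℕ → ℕ)
    (ha : FatSierpinski.IsQuasiGreedy β a) (d : ℕ → ℝ × ℝ)
    (hd : ∀ i, d i ∈ FatSierpinski.OmegaR) (k : ℕ) (hk : 2 ≤ k)
    (hper : FatSierpinski.SmallestPeriod d k) :
    d ∈ FatSierpinski.Ufat β ↔
      ∀ n : ℕ,
        FatSierpinski.seqLT (fun i => (d (n + i)).1) (fun i => (a i : ℝ)) ∧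
        FatSierpinski.seqLT (fun i => (d (n + i)).2) (fun i => (a i : ℝ)) ∧
        FatSierpinski.seqLT (fun i => 1 - (d (n + i)).1 - (d (n + i)).2)
          (fun i => (a i : ℝ)) := by
  obtain ⟨hβ1, hβ2⟩ := hβ
  obtain ⟨-, hp, hmin⟩ := hper
  have hnc : ¬ ∀ i, d i = d 0 := by
    intro h
    obtain ⟨i, hi⟩ := hmin 1 one_pos (by omega)
    exact hi (by rw [h (i + 1), h i])
  have n1 : ∃ i, (d i).1 ≠ 1 := by
    by_contra hcon
    push Not at hcon
    have hall : ∀ i, d i = (1, 0) := fun i => by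
      have h0 := hcon i
      rcases OmegaR_cases (hd i) with h | h | h <;> simp [h] at h0 ⊢
    exact hnc fun i => by rw [hall i, hall 0]
  have n2 : ∃ i, (d i).2 ≠ 1 := by
    by_contra hcon
    push Not at hcon
    have hall : ∀ i, d i = (0, 1) := fun i => by
      have h0 := hcon i
      rcases OmegaR_cases (hd i) with h | h | h <;> simp [h] at h0 ⊢
    exact hnc fun i => by rw [hall i, hall 0]
  have n3 : ∃ i, 1 - (d i).1 - (d i).2 ≠ 1 := by
    by_contra hcon
    push Not at hcon
    have hall : ∀ i, d i = (0, 0) := fun i => by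
      have h0 := hcon i
      rcases OmegaR_cases (hd i) with h | h | h <;> simp [h] at h0 ⊢
    exact hnc fun i => by rw [hall i, hall 0]
  have hk0 : 0 < k := by omega
  have c1 := core hβ1 hβ2 ha (bin1 hd) hk0 (fun i => by simp only [hp]) n1
  have c2 := core hβ1 hβ2 ha (bin2 hd) hk0 (fun i => by simp only [hp]) n2
  have c3 := core hβ1 hβ2 ha (bin3 hd) hk0 (fun i => by simp only [hp]) n3
  have hU : d ∈ Ufat β ↔ ∀ n : ℕ, (∑' i : ℕ, (β ^ (i + 1))⁻¹ • d (n + i)) ∉ Ofat β :=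
    ⟨fun h => h.2, fun h => ⟨hd, h⟩⟩
  rw [hU]
  simp only [Ofat_iff hβ1 hd, forall_and]
  exact and_congr c1 (and_congr c2 c3)

end FatSierpinski
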